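/- Let X be a real or complex Banach algebra with identity and let k be a fixed positive integer. Let g_n : X → X (n = 0,1,2,…) be a sequence of functions for which there exists a real number σ > 0 such that ‖g_n(ξ)‖ ≤ σ‖ξ‖ for all ξ ∈ X and all n. Let a_0, …, a_k, b_0, …, b_k ∈ X be such that Σ_{i=0}^{k} (‖a_i‖ + σ‖b_i‖) < 1. Then every solution (x_n)_{n ≥ −k} of the difference equation x_{n+1} = Σ_{i=0}^{k} a_i x_{n−i} + g_n(Σ_{i=0}^{k} b_i x_{n−i}) with initial values x_0, x_{−1}, …, x_{−k} ∈ X satisfies ‖x_n‖ ≤ α^{n/(k+1)} · max{‖x_0‖, ‖x_{−1}‖, …, ‖x_{−k}‖} for all n ≥ 1, where α = Σ_{i=0}^{k} (‖a_i‖ + σ‖b_i‖). -/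

import Mathlib

/-!
The norm of `x (n + 1)` is at most a combination of `‖x n‖, …, ‖x (n - k)‖` whose nonnegative
weights add up to `α`, hence at most `α` times the largest of them. So each factor `α ≤ 1` is paid
for by going back at most `k + 1` indices, and descending from `n` to the initial values collects
at least `n / (k + 1)` of these factors.
-/

open Finset

theorem exists_sum_mul_le_sum_mul {ι R : Type*} [Semiring R] [LinearOrder R] [IsOrderedRing R]
    {s : Finset ι} (hs : s.Nonempty) {w : ι → R} (hw : ∀ i ∈ s, 0 ≤ w i) (f : ι → R) :
    ∃ i ∈ s, ∑ j ∈ s, w j * f j ≤ (∑ j ∈ s, w j) * f i := by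
  obtain ⟨i, hi, hmax⟩ := s.exists_max_image f hs
  refine ⟨i, hi, ?_⟩
  rw [sum_mul]
  exact sum_le_sum fun j hj => mul_le_mul_of_nonneg_left (hmax j hj) (hw j hj)

theorem norm_sum_mul_le_sum_norm_mul_norm {ι X : Type*} [NonUnitalSeminormedRing X]
    (s : Finset ι) (c y : ι → X) : ‖∑ i ∈ s, c i * y i‖ ≤ ∑ i ∈ s, ‖c i‖ * ‖y i‖ :=
  norm_sum_le_of_le s fun i _ => norm_mul_le (c i) (y i)

theorem norm_sum_mul_add_apply_sum_mul_le {ι X : Type*} [NonUnitalSeminormedRing X]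
    {f : X → X} {σ : ℝ} (hσ : 0 ≤ σ) (hf : ∀ ξ, ‖f ξ‖ ≤ σ * ‖ξ‖) (s : Finset ι) (a b y : ι → X) :
    ‖∑ i ∈ s, a i * y i + f (∑ i ∈ s, b i * y i)‖ ≤ ∑ i ∈ s, (‖a i‖ + σ * ‖b i‖) * ‖y i‖ :=
  calc
    _ ≤ ‖∑ i ∈ s, a i * y i‖ + σ * ‖∑ i ∈ s, b i * y i‖ := norm_add_le_of_le le_rfl (hf _)
    _ ≤ ∑ i ∈ s, ‖a i‖ * ‖y i‖ + σ * ∑ i ∈ s, ‖b i‖ * ‖y i‖ := by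
      gcongr <;> exact norm_sum_mul_le_sum_norm_mul_norm ..
    _ = ∑ i ∈ s, (‖a i‖ + σ * ‖b i‖) * ‖y i‖ := by
      simp only [mul_sum, ← sum_add_distrib, add_mul, mul_assoc]

theorem mul_rpow_le_rpow_of_le_one_add {α s t : ℝ} (hα₀ : 0 ≤ α) (hα₁ : α ≤ 1) (hs : 0 ≤ s)
    (ht : 0 ≤ t) (hts : t ≤ 1 + s) : α * α ^ s ≤ α ^ t := by
  rw [← Real.rpow_one_add' hα₀ (by positivity)]
  exact Real.rpow_le_rpow_of_exponent_ge' hα₀ hα₁ ht hts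

theorem le_rpow_mul_of_exists_le_mul {u : ℤ → ℝ} {k : ℕ} {α M : ℝ} (hα₀ : 0 ≤ α) (hα₁ : α ≤ 1)
    (hM : 0 ≤ M) (hinit : ∀ i ≤ k, u (-(i : ℤ)) ≤ M)
    (hstep : ∀ n : ℕ, ∃ i ≤ k, u (n + 1) ≤ α * u (n - i)) (n : ℕ) :
    u n ≤ α ^ ((n : ℝ) / (k + 1)) * M := by
  induction n using Nat.strong_induction_on with
  | _ n ih =>
    obtain _ | n := n
    · simpa using hinit 0 k.zero_le
    obtain ⟨i, hik, hi⟩ := hstep n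
    have hik' : (i : ℝ) ≤ k := mod_cast hik
    -- Initial values carry the exponent `0`, so both ranges of `n - i` have the same form.
    obtain ⟨s, hs, hns, hus⟩ : ∃ s : ℝ, 0 ≤ s ∧ ((n + 1 : ℕ) : ℝ) / (k + 1) ≤ 1 + s ∧
        u (n - i) ≤ α ^ s * M := by
      obtain hin | hni := le_or_gt i n
      · refine ⟨((n - i : ℕ) : ℝ) / (k + 1), by positivity, ?_, ?_⟩
        · rw [one_add_div (by positivity)]
          gcongr
          push_cast [hin]
          linarith
        · simpa [hin] using ih (n - i) (by lia)
      · refine ⟨0, le_rfl, ?_, ?_⟩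
        · rw [add_zero, div_le_one (by positivity)]
          exact_mod_cast (by lia : n + 1 ≤ k + 1)
        · simpa [show (n : ℤ) - i = -((i - n : ℕ) : ℤ) by lia] using hinit (i - n) (by lia)
    calc
      u (n + 1 : ℕ) ≤ α * u (n - i) := mod_cast hi
      _ ≤ α * (α ^ s * M) := by gcongr
      _ = α * α ^ s * M := (mul_assoc ..).symm
      _ ≤ α ^ (((n + 1 : ℕ) : ℝ) / (k + 1)) * M := by
        gcongr
        exact mul_rpow_le_rpow_of_le_one_add hα₀ hα₁ hs (by positivity) hns

theorem convergence_linear_argument_equation_banach_algebra_general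
    {X : Type*} [NonUnitalSeminormedRing X] (k : ℕ) (g : ℕ → X → X) (σ : ℝ) (hσ : 0 ≤ σ)
    (hg : ∀ (n : ℕ) (ξ : X), ‖g n ξ‖ ≤ σ * ‖ξ‖) (a b : ℕ → X)
    (hab : ∑ i ∈ range (k + 1), (‖a i‖ + σ * ‖b i‖) ≤ 1) (x : ℤ → X)
    (hx : ∀ n : ℤ, 0 ≤ n → x (n + 1) =
      ∑ i ∈ range (k + 1), a i * x (n - (i : ℤ)) +
        g n.toNat (∑ i ∈ range (k + 1), b i * x (n - (i : ℤ))))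
    (n : ℤ) (hn : 0 ≤ n) :
    ‖x n‖ ≤ (∑ i ∈ range (k + 1), (‖a i‖ + σ * ‖b i‖)) ^ ((n : ℝ) / ((k : ℝ) + 1)) *
      (univ.sup' univ_nonempty fun i : Fin (k + 1) => ‖x (-(i : ℤ))‖) := by
  lift n to ℕ using hn
  have hw : ∀ i ∈ range (k + 1), 0 ≤ ‖a i‖ + σ * ‖b i‖ := fun i _ => by positivity
  have hinit (i : ℕ) (hi : i ≤ k) :
      ‖x (-(i : ℤ))‖ ≤ univ.sup' univ_nonempty fun i : Fin (k + 1) => ‖x (-(i : ℤ))‖ :=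
    le_sup' (fun i : Fin (k + 1) => ‖x (-(i : ℤ))‖) (mem_univ ⟨i, Nat.lt_succ_of_le hi⟩)
  have hstep (m : ℕ) : ∃ i ≤ k,
      ‖x (m + 1)‖ ≤ (∑ j ∈ range (k + 1), (‖a j‖ + σ * ‖b j‖)) * ‖x (m - i)‖ := by
    obtain ⟨i, hi, hle⟩ := exists_sum_mul_le_sum_mul nonempty_range_add_one hw
      fun j => ‖x (m - (j : ℤ))‖
    refine ⟨i, Nat.lt_succ_iff.mp (mem_range.mp hi), ?_⟩
    rw [hx m m.cast_nonneg]
    exact (norm_sum_mul_add_apply_sum_mul_le hσ (hg _) _ _ _ _).trans hle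
  exact le_rpow_mul_of_exists_le_mul (u := fun m => ‖x m‖) (sum_nonneg hw) hab
    ((norm_nonneg _).trans (hinit 0 k.zero_le)) hinit hstep n

/-- **Lemma 2 (gas3).** In a real or complex Banach algebra `X` with identity,
if `‖gₙ(ξ)‖ ≤ σ‖ξ‖` for all `n` and `ξ` (with `σ > 0`), and
`∑_{i=0}^{k} (‖aᵢ‖ + σ‖bᵢ‖) < 1`, then every solution of
`x_{n+1} = ∑ᵢ aᵢ x_{n-i} + gₙ(∑ᵢ bᵢ x_{n-i})` satisfies
`‖xₙ‖ ≤ α^{n/(k+1)} max{‖x₀‖,…,‖x_{-k}‖}` where `α = ∑ᵢ (‖aᵢ‖ + σ‖bᵢ‖)`. -/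
theorem convergence_linear_argument_equation_banach_algebra
    {𝕜 X : Type*} [RCLike 𝕜] [NormedRing X] [NormOneClass X]
    [NormedAlgebra 𝕜 X] [CompleteSpace X]
    (k : ℕ) (hk : 0 < k)
    (g : ℕ → X → X) (σ : ℝ) (hσ : 0 < σ)
    (hg : ∀ (n : ℕ) (ξ : X), ‖g n ξ‖ ≤ σ * ‖ξ‖)
    (a b : ℕ → X)
    (hab : ∑ i ∈ Finset.range (k + 1), (‖a i‖ + σ * ‖b i‖) < 1)
    (x : ℤ → X)
    (hx : ∀ n : ℤ, 0 ≤ n → x (n + 1) =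
      ∑ i ∈ Finset.range (k + 1), a i * x (n - (i : ℤ)) +
        g n.toNat (∑ i ∈ Finset.range (k + 1), b i * x (n - (i : ℤ)))) :
    ∀ n : ℤ, 1 ≤ n →
      ‖x n‖ ≤ (∑ i ∈ Finset.range (k + 1), (‖a i‖ + σ * ‖b i‖)) ^ ((n : ℝ) / ((k : ℝ) + 1)) *
        (Finset.univ.sup' Finset.univ_nonempty fun i : Fin (k + 1) => ‖x (-(i : ℤ))‖) := by
  intro n hn
  exact convergence_linear_argument_equation_banach_algebra_general k g σ hσ.le hg a b hab.le x hx n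
    (zero_le_one.trans hn)
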